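/- arXiv:1609.01747 — 2 statements merged into one kernel-verified Lean document; each statement's English description precedes it below -/
import Mathlib

section
/- Let X₀ and X be finite sets and w > 0 a real weight. Define bilinear pairings ⟨f, g⟩₀ = Σ_{x ∈ X₀} f(x) g(x) on ℂ^{X₀} and ⟨f, g⟩ₙ = w · Σ_{u ∈ X} f(u) g(u) on ℂ^X. Let Q : ℂ^X → ℂ^{X₀}, 𝔔 : ℂ^{X₀} → ℂ^{X₀}, and D : ℂ^X → ℂ^X be linear maps, let Q* : ℂ^{X₀} → ℂ^X be the transpose of Q characterized by ⟨f, Qφ⟩₀ = ⟨Q* f, φ⟩ₙ for all f ∈ ℂ^{X₀} and φ ∈ ℂ^X, and let μ ∈ ℂ. Let V : ℂ^X × ℂ^X → ℂ and V' : ℂ^X × ℂ^X × ℂ^X → ℂ^X be functions satisfying the Euler identity ⟨φ_*, V'(φ, φ_*, φ)⟩ₙ = 2 V(φ_*, φ). Suppose the field φ ∈ ℂ^X satisfies the background field equation D φ = Q* 𝔔 ψ − Q* 𝔔 Q φ + μ φ − V'(φ, φ_*, φ) for given ψ_*, ψ ∈ ℂ^{X₀} and φ_* ∈ ℂ^X.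 Then the action A := ⟨ψ_* − Q φ_*, 𝔔 (ψ − Q φ)⟩₀ + ⟨φ_*, D φ⟩ₙ − μ ⟨φ_*, φ⟩ₙ + V(φ_*, φ) satisfies A = ⟨ψ_*, 𝔔 (ψ − Q φ)⟩₀ − V(φ_*, φ). -/
open scoped BigOperators

/-- **Simplification of the block-spin action at a background field.**
With bilinear pairings `⟨f,g⟩₀ = ∑_{x∈X₀} f x * g x` and `⟨f,g⟩ₙ = w ∑_{u∈X} f u * g u`,
a transpose `Q*` of `Q` characterized by `⟨f, Qφ⟩₀ = ⟨Q* f, φ⟩ₙ`, a quartic interaction `V`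
with gradient `V'` satisfying the Euler identity `⟨φ_*, V'(φ,φ_*,φ)⟩ₙ = 2 V(φ_*,φ)`, and `φ`
solving the background field equation `D φ = Q* 𝔔 ψ − Q* 𝔔 Q φ + μ φ − V'(φ,φ_*,φ)`, the action
`A = ⟨ψ_* − Qφ_*, 𝔔(ψ − Qφ)⟩₀ + ⟨φ_*, Dφ⟩ₙ − μ ⟨φ_*, φ⟩ₙ + V(φ_*,φ)`
equals `⟨ψ_*, 𝔔(ψ − Qφ)⟩₀ − V(φ_*,φ)`. -/
theorem stmt1 {X₀ X : Type*} [Fintype X₀] [Fintype X] (w : ℝ) (hw : 0 < w)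
    (Q : (X → ℂ) →ₗ[ℂ] (X₀ → ℂ)) (𝔔 : (X₀ → ℂ) →ₗ[ℂ] (X₀ → ℂ))
    (D : (X → ℂ) →ₗ[ℂ] (X → ℂ)) (Qstar : (X₀ → ℂ) →ₗ[ℂ] (X → ℂ)) (μ : ℂ)
    (pair₀ : (X₀ → ℂ) → (X₀ → ℂ) → ℂ) (pairₙ : (X → ℂ) → (X → ℂ) → ℂ)
    (hpair₀ : ∀ f g, pair₀ f g = ∑ x : X₀, f x * g x)
    (hpairₙ : ∀ f g, pairₙ f g = (w : ℂ) * ∑ u : X, f u * g u)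
    (hQstar : ∀ (f : X₀ → ℂ) (φ : X → ℂ), pair₀ f (Q φ) = pairₙ (Qstar f) φ)
    (V : (X → ℂ) → (X → ℂ) → ℂ) (V' : (X → ℂ) → (X → ℂ) → (X → ℂ) → (X → ℂ))
    (hEuler : ∀ φs φ : X → ℂ, pairₙ φs (V' φ φs φ) = 2 * V φs φ)
    (ψs ψ : X₀ → ℂ) (φs φ : X → ℂ)
    (hbg : D φ = Qstar (𝔔 ψ) - Qstar (𝔔 (Q φ)) + μ • φ - V' φ φs φ) :
    pair₀ (ψs - Q φs) (𝔔 (ψ - Q φ)) + pairₙ φs (D φ) - μ * pairₙ φs φ + V φs φ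
      = pair₀ ψs (𝔔 (ψ - Q φ)) - V φs φ := by
  have hD : D φ = Qstar (𝔔 (ψ - Q φ)) + μ • φ - V' φ φs φ := by
    rw [hbg, map_sub, map_sub]
  have h1 : pair₀ (ψs - Q φs) (𝔔 (ψ - Q φ))
      = pair₀ ψs (𝔔 (ψ - Q φ)) - pair₀ (𝔔 (ψ - Q φ)) (Q φs) := by
    simp only [hpair₀, ← Finset.sum_sub_distrib]
    refine Finset.sum_congr rfl fun x _ => ?_
    simp only [Pi.sub_apply]
    ring
  have h2 : pairₙ φs (D φ) = pairₙ (Qstar (𝔔 (ψ - Q φ))) φs + μ * pairₙ φs φ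
      - pairₙ φs (V' φ φs φ) := by
    rw [hD]
    simp only [hpairₙ, Finset.mul_sum, ← Finset.sum_sub_distrib, ← Finset.sum_add_distrib]
    refine Finset.sum_congr rfl fun x _ => ?_
    simp only [Pi.sub_apply, Pi.add_apply, Pi.smul_apply, smul_eq_mul]
    ring
  rw [h1, h2, hQstar, hEuler]
  ring
end

section
/- Let X be a finite set, D an invertible X × X complex matrix, ρ ∈ ℂ^X, and c > 0 such that Re (η̄ᵀ D⁻² η) ≥ c ‖η‖² for all η ∈ ℂ^X, where ‖·‖ is the Euclidean norm and η̄ the entrywise conjugate. Let t ∈ [0,1] and suppose ζ, ζ_* ∈ ℂ^X satisfy the constraint D ζ = D† ζ̄_* + t ρ, where D† is the conjugate transpose of D. Then Re Σ_{x ∈ X} ζ_*(x) ζ(x) ≥ (c / ‖D⁻¹‖²) ‖ζ‖² − ‖(Dᵀ)⁻¹‖ ‖ρ‖ ‖ζ‖, where ‖·‖ on matrices denotes the operator norm induced by the Euclidean norm. In particular, if ‖ζ‖ ≥ (2 ‖D⁻¹‖² ‖(Dᵀ)⁻¹‖ / c) ‖ρ‖, then Re Σ_{x ∈ X} ζ_*(x)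 ζ(x) ≥ (c / (2 ‖D⁻¹‖²)) ‖ζ‖². -/
open scoped BigOperators Matrix

/-- The Euclidean (`ℓ²`) norm of a vector in `ℂ^X`. -/
noncomputable def eucNorm {X : Type*} [Fintype X] (v : X → ℂ) : ℝ :=
  ‖(WithLp.equiv 2 (X → ℂ)).symm v‖

/-- The operator norm of a complex matrix, induced by the Euclidean norm on `ℂ^X`. -/
noncomputable def matOpNorm {X : Type*} [Fintype X] [DecidableEq X] (M : Matrix X X ℂ) : ℝ :=
  ‖Matrix.toEuclideanCLM (𝕜 := ℂ) M‖

lemma eucNorm_mulVec_le {X : Type*} [Fintype X] [DecidableEq X] (M : Matrix X X ℂ) (v : X → ℂ) :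
    eucNorm (M *ᵥ v) ≤ matOpNorm M * eucNorm v := by
  have h := (Matrix.toEuclideanCLM (𝕜 := ℂ) M).le_opNorm (WithLp.toLp 2 v)
  rw [Matrix.toEuclideanCLM_toLp] at h
  exact h

lemma eucNorm_star {X : Type*} [Fintype X] (v : X → ℂ) : eucNorm (star v) = eucNorm v := by
  simp [eucNorm, EuclideanSpace.norm_eq]

lemma norm_dotProduct_le_eucNorm {X : Type*} [Fintype X] (v w : X → ℂ) :
    ‖v ⬝ᵥ w‖ ≤ eucNorm v * eucNorm w := by
  have h := norm_inner_le_norm (𝕜 := ℂ) (WithLp.toLp 2 (star v)) (WithLp.toLp 2 w)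
  rw [EuclideanSpace.inner_toLp_toLp, star_star, dotProduct_comm] at h
  rw [← eucNorm_star v]
  exact h

/-- **Coercivity of the fluctuation pairing on the Stokes cylinder.**
Let `D` be invertible with `Re (η̄ᵀ D⁻² η) ≥ c ‖η‖²`, let `t ∈ [0,1]`, and suppose
`D ζ = D† ζ̄_* + t ρ`.  Then
`Re ∑_x ζ_*(x) ζ(x) ≥ (c/‖D⁻¹‖²) ‖ζ‖² − ‖(Dᵀ)⁻¹‖ ‖ρ‖ ‖ζ‖`; in particular, if
`‖ζ‖ ≥ (2 ‖D⁻¹‖² ‖(Dᵀ)⁻¹‖ / c) ‖ρ‖` then `Re ∑_x ζ_*(x) ζ(x) ≥ (c/(2‖D⁻¹‖²)) ‖ζ‖²`. -/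
theorem stmt5 {X : Type*} [Fintype X] [DecidableEq X]
    (D : Matrix X X ℂ) (hD : IsUnit D.det) (ρ : X → ℂ) (c : ℝ) (hc : 0 < c)
    (hcoer : ∀ η : X → ℂ, c * (eucNorm η) ^ 2 ≤ ((star η) ⬝ᵥ ((D⁻¹ * D⁻¹) *ᵥ η)).re)
    (t : ℝ) (ht : t ∈ Set.Icc (0 : ℝ) 1) (ζ ζs : X → ℂ)
    (hcon : D *ᵥ ζ = Dᴴ *ᵥ (star ζs) + (t : ℂ) • ρ) :
    (c / (matOpNorm D⁻¹) ^ 2) * (eucNorm ζ) ^ 2 - matOpNorm (Dᵀ)⁻¹ * eucNorm ρ * eucNorm ζ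
        ≤ (∑ x : X, ζs x * ζ x).re ∧
      ((2 * (matOpNorm D⁻¹) ^ 2 * matOpNorm (Dᵀ)⁻¹ / c) * eucNorm ρ ≤ eucNorm ζ →
        (c / (2 * (matOpNorm D⁻¹) ^ 2)) * (eucNorm ζ) ^ 2 ≤ (∑ x : X, ζs x * ζ x).re) := by
  have hdet : IsUnit (Dᵀ).det := by rwa [Matrix.det_transpose]
  have hinv : D⁻¹ *ᵥ (D *ᵥ ζ) = ζ := by
    rw [Matrix.mulVec_mulVec, Matrix.nonsing_inv_mul _ hD, Matrix.one_mulVec]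
  have hstar : star (D *ᵥ ζ) = Dᵀ *ᵥ ζs + (t : ℂ) • star ρ := by
    rw [hcon, star_add, Matrix.star_mulVec, Matrix.conjTranspose_conjTranspose, star_star,
      star_smul, Matrix.mulVec_transpose]
    simp
  have key : star (D *ᵥ ζ) ⬝ᵥ ((D⁻¹ * D⁻¹) *ᵥ (D *ᵥ ζ))
      = ζs ⬝ᵥ ζ + (t : ℂ) * (((Dᵀ)⁻¹ *ᵥ star ρ) ⬝ᵥ ζ) := by
    rw [← Matrix.mulVec_mulVec, hinv, hstar, Matrix.dotProduct_mulVec, ← Matrix.mulVec_transpose,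
      Matrix.transpose_nonsing_inv, Matrix.mulVec_add, Matrix.mulVec_mulVec,
      Matrix.nonsing_inv_mul _ hdet, Matrix.one_mulVec, Matrix.mulVec_smul, add_dotProduct,
      smul_dotProduct, smul_eq_mul]
  have hco := hcoer (D *ᵥ ζ)
  rw [key, Complex.add_re, Complex.re_ofReal_mul] at hco
  have hz : eucNorm ζ ≤ matOpNorm D⁻¹ * eucNorm (D *ᵥ ζ) := by
    have := eucNorm_mulVec_le D⁻¹ (D *ᵥ ζ)
    rwa [hinv] at this
  have hw : (((Dᵀ)⁻¹ *ᵥ star ρ) ⬝ᵥ ζ).re ≤ matOpNorm (Dᵀ)⁻¹ * eucNorm ρ * eucNorm ζ := by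
    refine (Complex.re_le_norm _).trans ((norm_dotProduct_le_eucNorm _ _).trans ?_)
    refine mul_le_mul_of_nonneg_right ?_ (norm_nonneg _)
    rw [← eucNorm_star ρ]
    exact eucNorm_mulVec_le _ _
  change _ ≤ (ζs ⬝ᵥ ζ).re ∧ (_ → _ ≤ (ζs ⬝ᵥ ζ).re)
  have hN : 0 ≤ matOpNorm D⁻¹ := norm_nonneg _
  have hM : 0 ≤ matOpNorm (Dᵀ)⁻¹ := norm_nonneg _
  have hr : 0 ≤ eucNorm ρ := norm_nonneg _
  have hz0 : 0 ≤ eucNorm ζ := norm_nonneg _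
  have hd0 : 0 ≤ eucNorm (D *ᵥ ζ) := norm_nonneg _
  generalize (ζs ⬝ᵥ ζ).re = S at *
  generalize (((Dᵀ)⁻¹ *ᵥ star ρ) ⬝ᵥ ζ).re = e at *
  generalize eucNorm (D *ᵥ ζ) = d at *
  generalize eucNorm ζ = z at *
  generalize eucNorm ρ = r at *
  generalize matOpNorm D⁻¹ = N at *
  generalize matOpNorm (Dᵀ)⁻¹ = M at *
  have hE : 0 ≤ M * r * z := by positivity
  have hte : t * e ≤ M * r * z :=
    (mul_le_mul_of_nonneg_left hw ht.1).trans (mul_le_of_le_one_left hE ht.2)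
  rcases hN.eq_or_lt with h0 | hpos
  · subst h0
    have hzz : z = 0 := by linarith
    subst hzz
    have : 0 ≤ c * d ^ 2 := by positivity
    constructor
    · simp; linarith
    · intro _; simp; linarith
  · have hsq : z ^ 2 ≤ N ^ 2 * d ^ 2 := by
      rw [← mul_pow]; exact pow_le_pow_left₀ hz0 hz 2
    have h1 : c / N ^ 2 * z ^ 2 ≤ c * d ^ 2 := by
      rw [div_mul_eq_mul_div, div_le_iff₀ (by positivity)]
      nlinarith
    have hA : c / N ^ 2 * z ^ 2 - M * r * z ≤ S := by linarith
    refine ⟨hA, fun h => ?_⟩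
    have h2 : M * r ≤ c / (2 * N ^ 2) * z := by
      have h3 := mul_le_mul_of_nonneg_left h (show 0 ≤ c / (2 * N ^ 2) by positivity)
      have h4 : c / (2 * N ^ 2) * (2 * N ^ 2 * M / c * r) = M * r := by field_simp
      linarith
    have h5 := mul_le_mul_of_nonneg_right h2 hz0
    have h6 : c / N ^ 2 * z ^ 2 = 2 * (c / (2 * N ^ 2) * z ^ 2) := by field_simp
    nlinarith
end
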